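/- Let n ≥ 3 be an odd integer and let ψ be a real with 0 < ψ < 1. Then, as ω → +∞, τ_2(ψ,ω) tends to ((n−3)/4 + ψ)/(n ψ²). -/

import Mathlib

open Filter Finset

/-- `K n a ψ ω = Σ_{i=0}^{n−a} C(n−a,i) ψ^i (1−ψ)^{n−a−i} ω^{(n−a−i)(i+a)}`. -/
noncomputable def K (n a : ℕ) (ψ ω : ℝ) : ℝ :=
  ∑ i ∈ Finset.range (n - a + 1),
    (Nat.choose (n - a) i : ℝ) * ψ ^ i * (1 - ψ) ^ (n - a - i) * ω ^ ((n - a - i) * (i + a))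

/-- `τ j = K n j / K n 0`. -/
noncomputable def τ (n j : ℕ) (ψ ω : ℝ) : ℝ := K n j ψ ω / K n 0 ψ ω

/-- pmf of the (L)MBD. -/
noncomputable def lmbd (n : ℕ) (ψ ω : ℝ) (y : ℕ) : ℝ :=
  (Nat.choose n y : ℝ) * ψ ^ y * (1 - ψ) ^ (n - y) * ω ^ ((n - y) * y) / K n 0 ψ ω

/-- mean of the (L)MBD. -/
noncomputable def lmbdMean (n : ℕ) (ψ ω : ℝ) : ℝ :=
  ∑ y ∈ Finset.range (n + 1), (y : ℝ) * lmbd n ψ ω y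

/-- variance of the (L)MBD. -/
noncomputable def lmbdVar (n : ℕ) (ψ ω : ℝ) : ℝ :=
  ∑ y ∈ Finset.range (n + 1), ((y : ℝ) - lmbdMean n ψ ω) ^ 2 * lmbd n ψ ω y

/-- The exponent `(2m+1-y)y` is maximal exactly at `y = m` and `y = m + 1`. -/
lemma tendsto_pow_mul_div_central (m y : ℕ) (hy : y ≤ 2 * m + 1) :
    Tendsto (fun ω : ℝ => ω ^ ((2 * m + 1 - y) * y) / ω ^ (m * (m + 1))) atTop
      (nhds ((if y = m then 1 else 0) + (if y = m + 1 then 1 else 0))) := by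
  obtain ⟨z, hz⟩ := Nat.exists_eq_add_of_le hy
  have hzy : 2 * m + 1 - y = z := by omega
  rw [hzy]
  by_cases h : y = m ∨ y = m + 1
  · have he : z * y = m * (m + 1) := by
      rcases h with rfl | rfl
      · obtain rfl : z = y + 1 := by omega
        ring
      · obtain rfl : z = m := by omega
        rfl
    have hl : ((if y = m then 1 else 0) + (if y = m + 1 then 1 else 0) : ℝ) = 1 := by
      rcases h with rfl | rfl <;> simp
    rw [he, hl]
    refine tendsto_const_nhds.congr' ?_
    filter_upwards [eventually_gt_atTop (0 : ℝ)] with ω hω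
    exact (div_self (pow_pos hω _).ne').symm
  · push Not at h
    rw [if_neg h.1, if_neg h.2, add_zero]
    refine tendsto_pow_div_pow_atTop_zero ?_
    rcases lt_or_gt_of_ne h.1 with h1 | h1
    · obtain ⟨d, rfl⟩ := Nat.exists_eq_add_of_lt h1
      obtain rfl : z = y + 2 * d + 3 := by omega
      nlinarith
    · obtain ⟨d, rfl⟩ := Nat.exists_eq_add_of_lt (show m + 1 < y by omega)
      obtain ⟨e, rfl⟩ : ∃ e, m = z + e := ⟨m - z, by omega⟩
      obtain rfl : e = d + 1 := by omega
      nlinarith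

lemma tendsto_K_div_pow (m a : ℕ) (ha : a ≤ 2 * m + 1) (ψ : ℝ) :
    Tendsto (fun ω : ℝ => K (2 * m + 1) a ψ ω / ω ^ (m * (m + 1))) atTop
      (nhds (∑ i ∈ range (2 * m + 1 - a + 1),
        ((2 * m + 1 - a).choose i : ℝ) * ψ ^ i * (1 - ψ) ^ (2 * m + 1 - a - i) *
          ((if i + a = m then 1 else 0) + (if i + a = m + 1 then 1 else 0)))) := by
  simp only [K, sum_div, mul_div_assoc]
  refine tendsto_finsetSum _ fun i hi => Tendsto.const_mul _ ?_
  have hi' := mem_range.1 hi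
  have he : 2 * m + 1 - a - i = 2 * m + 1 - (i + a) := by omega
  rw [he]
  exact tendsto_pow_mul_div_central m (i + a) (by omega)

lemma tendsto_K_zero_div_pow (m : ℕ) (ψ : ℝ) :
    Tendsto (fun ω : ℝ => K (2 * m + 1) 0 ψ ω / ω ^ (m * (m + 1))) atTop
      (nhds (((2 * m + 1).choose m : ℝ) * (ψ ^ m * (1 - ψ) ^ m))) := by
  convert tendsto_K_div_pow m 0 (Nat.zero_le _) ψ using 2
  have h₁ : 2 * m + 1 - m = m + 1 := by omega
  have h₂ : 2 * m + 1 - (m + 1) = m := by omega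
  have hc : (2 * m + 1).choose (m + 1) = (2 * m + 1).choose m := by
    rw [← Nat.choose_symm (show m ≤ 2 * m + 1 by omega), h₁]
  simp only [mul_add, sum_add_distrib, mul_ite, mul_one, mul_zero, add_zero, Nat.sub_zero,
    sum_ite_eq', mem_range]
  rw [if_pos (by omega), if_pos (by omega), h₁, h₂, hc]
  ring

lemma choose_central_relations (k : ℕ) :
    ((2 * k + 3).choose k : ℝ) * (2 * (2 * k + 5)) = (k + 1) * (2 * k + 5).choose (k + 2) ∧
      ((2 * k + 3).choose (k + 1) : ℝ) * (2 * (2 * k + 5)) =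
        (k + 3) * (2 * k + 5).choose (k + 2) := by
  have h₁ := Nat.choose_succ_right_eq (2 * k + 3) k
  have h₂ := Nat.add_one_mul_choose_eq (2 * k + 4) (k + 1)
  have h₃ := Nat.choose_succ_succ (2 * k + 3) k
  rw [show 2 * k + 3 - k = k + 3 by omega] at h₁
  simp only [Nat.succ_eq_add_one] at h₃
  rw [h₃] at h₂
  have h₁' : ((2 * k + 3).choose (k + 1) : ℝ) * (k + 1) = (2 * k + 3).choose k * (k + 3) := by
    exact_mod_cast h₁
  have h₂' : (2 * k + 5 : ℝ) * ((2 * k + 3).choose k + (2 * k + 3).choose (k + 1)) =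
      (2 * k + 5).choose (k + 2) * (k + 2) := by
    exact_mod_cast h₂
  have hk : (k + 2 : ℝ) ≠ 0 := by positivity
  constructor <;> apply mul_right_cancel₀ hk
  · linear_combination (k + 1 : ℝ) * h₂' - (2 * k + 5 : ℝ) * h₁'
  · linear_combination (k + 3 : ℝ) * h₂' + (2 * k + 5 : ℝ) * h₁'

lemma tendsto_K_two_div_pow (m : ℕ) (hm : 1 ≤ m) (ψ : ℝ) (hψ : ψ ≠ 0) :
    Tendsto (fun ω : ℝ => K (2 * m + 1) 2 ψ ω / ω ^ (m * (m + 1))) atTop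
      (nhds ((((m : ℝ) - 1) / 2 + ψ) / ((2 * m + 1) * ψ ^ 2) *
        (((2 * m + 1).choose m : ℝ) * (ψ ^ m * (1 - ψ) ^ m)))) := by
  convert tendsto_K_div_pow m 2 (by omega) ψ using 2
  obtain rfl | ⟨k, rfl⟩ : m = 1 ∨ ∃ k, m = k + 2 := by
    rcases Nat.exists_eq_add_of_le hm with ⟨_ | k, rfl⟩
    · exact Or.inl rfl
    · exact Or.inr ⟨k, by omega⟩
  · norm_num [sum_range_succ]
    field_simp
  · obtain ⟨hB, hA⟩ := choose_central_relations k
    have h₁ : 2 * k + 5 - 2 = 2 * k + 3 := by omega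
    have h₂ : 2 * k + 3 - k = k + 3 := by omega
    have h₃ : 2 * k + 3 - (k + 1) = k + 2 := by omega
    have h₄ : ∀ i, i + 2 = k + 2 + 1 ↔ i = k + 1 := by omega
    have h₅ : 2 * (k + 2) + 1 = 2 * k + 5 := by omega
    simp only [h₁, h₄, h₅, mul_add _ (ite _ _ _), sum_add_distrib, mul_ite, mul_one, mul_zero,
      add_left_inj, sum_ite_eq', mem_range]
    rw [if_pos (by omega), if_pos (by omega), h₂, h₃]
    have hk : (2 * k + 5 : ℝ) ≠ 0 := by positivity
    have hk' : (2 * ((k + 2 : ℕ) : ℝ) + 1) = 2 * k + 5 := by push_cast; ring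
    rw [hk', div_mul_eq_mul_div, div_eq_iff (by positivity)]
    push_cast
    linear_combination (-(1 - ψ) ^ (k + 3) * ψ ^ (k + 2) / 2) * hB -
      ((1 - ψ) ^ (k + 2) * ψ ^ (k + 3) / 2) * hA

theorem stmt_12 (n : ℕ) (hn : 3 ≤ n) (hno : Odd n)
    (ψ : ℝ) (hψ0 : 0 < ψ) (hψ1 : ψ < 1) :
    Filter.Tendsto (fun ω : ℝ => τ n 2 ψ ω) Filter.atTop
      (nhds ((((n : ℝ) - 3) / 4 + ψ) / ((n : ℝ) * ψ ^ 2))) := by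
  obtain ⟨m, rfl⟩ := hno
  have hψ : 0 < 1 - ψ := sub_pos.2 hψ1
  have hc : ((2 * m + 1).choose m : ℝ) * (ψ ^ m * (1 - ψ) ^ m) ≠ 0 := by
    have : 0 < (2 * m + 1).choose m := Nat.choose_pos (by omega)
    positivity
  have h := (tendsto_K_two_div_pow m (by omega) ψ hψ0.ne').div (tendsto_K_zero_div_pow m ψ) hc
  rw [mul_div_cancel_right₀ _ hc] at h
  have hlim : (((2 * m + 1 : ℕ) : ℝ) - 3) / 4 + ψ = ((m : ℝ) - 1) / 2 + ψ := by
    push_cast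
    ring
  rw [hlim]
  push_cast
  refine h.congr' ?_
  filter_upwards [eventually_gt_atTop (0 : ℝ)] with ω hω
  exact div_div_div_cancel_right₀ (pow_pos hω _).ne' _ _
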